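/- There exist e₀, e ∈ ℕ such that e ⊆_{=^{ce}} e₀, but for every i ∈ ℕ and every d ∈ ℕ with ran φ_d = ran φ_{e₀} ∩ W_i, it is not the case that e (=^{ce})⁺ d. In other words, the set of (=^{ce})⁺-classes of codes e with e ⊆_{=^{ce}} e₀ is not equal to the set of (=^{ce})⁺-classes of codes enumerating the sets ran φ_{e₀} ∩ W_i for i ∈ ℕ. -/

import Mathlib

/-- The `e`-th partial computable function. -/
def phi (e : ℕ) : ℕ →. ℕ :=
  Nat.Partrec.Code.eval (Denumerable.ofNat Nat.Partrec.Code e)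

/-- `W_e`, the `e`-th c.e. set: the domain of `φ_e`. -/
def WSet (e : ℕ) : Set ℕ := (phi e).Dom

/-- The `E`-equivalence class of `k`. -/
def classOf (E : ℕ → ℕ → Prop) (k : ℕ) : Set ℕ := {x | E k x}

/-- Computable reducibility of binary relations on ℕ. -/
def Reduces (E F : ℕ → ℕ → Prop) : Prop :=
  ∃ f : ℕ → ℕ, Computable f ∧ ∀ m n, E m n ↔ F (f m) (f n)

/-- The computable FS-jump of `E`: `e E⁺ e'` iff the set of `E`-classes of elements
of `ran φ_e` equals the set of `E`-classes of elements of `ran φ_{e'}`. -/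
def FSJump (E : ℕ → ℕ → Prop) : ℕ → ℕ → Prop :=
  fun e e' => classOf E '' (phi e).ran = classOf E '' (phi e').ran

/-- Equality of c.e. sets: `e =^{ce} e'` iff `W_e = W_{e'}`. -/
def eqCE : ℕ → ℕ → Prop := fun e e' => WSet e = WSet e'

/-- `e ⊆_E e'`: every element of `ran φ_e` is `E`-equivalent to some element
of `ran φ_{e'}`. -/
def subE (E : ℕ → ℕ → Prop) (e e' : ℕ) : Prop :=
  ∀ k ∈ (phi e).ran, ∃ m ∈ (phi e').ran, E k m

open Nat.Partrec (Code)
open Nat.Partrec.Code Encodable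

/-- The auxiliary function of the recursion-theorem construction. -/
def fsAux (c : Code) (x : ℕ) : Part ℕ :=
  bif decide (x.unpair.2 = 2 * x.unpair.1) then Part.some 0
  else bif decide (x.unpair.2 = 2 * x.unpair.1 + 1) then
    phi x.unpair.1 (encode (Code.curry c x.unpair.1))
  else Part.none

lemma phi_partrec : Partrec₂ phi := by
  unfold phi
  exact Nat.Partrec.Code.eval_part.comp ((Computable.ofNat Code).comp Computable.fst)
    Computable.snd

lemma curry_enc_comp (c : Code) : Computable (fun i : ℕ => encode (Code.curry c i)) :=
  Computable.encode.comp
    (Code.primrec₂_curry.comp (Primrec.const c) Primrec.id).to_comp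

lemma fsAux_partrec : Partrec₂ fsAux := by
  have h1 : Primrec (fun p : Code × ℕ => p.2.unpair.1) :=
    Primrec.fst.comp (Primrec.unpair.comp Primrec.snd)
  have h2 : Primrec (fun p : Code × ℕ => p.2.unpair.2) :=
    Primrec.snd.comp (Primrec.unpair.comp Primrec.snd)
  have h3 : Primrec (fun p : Code × ℕ => 2 * p.2.unpair.1) :=
    Primrec.nat_mul.comp (Primrec.const 2) h1
  refine Partrec.cond (c := fun p : Code × ℕ => decide (p.2.unpair.2 = 2 * p.2.unpair.1))
    (Primrec.eq.decide.comp h2 h3).to_comp (Computable.const 0).partrec ?_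
  refine Partrec.cond (c := fun p : Code × ℕ => decide (p.2.unpair.2 = 2 * p.2.unpair.1 + 1))
    (Primrec.eq.decide.comp h2 (Primrec.succ.comp h3)).to_comp ?_ Partrec.none
  exact phi_partrec.comp h1.to_comp
    (Computable.encode.comp (Code.primrec₂_curry.comp Primrec.fst h1).to_comp)

lemma exists_phi {f : ℕ →. ℕ} (hf : Partrec f) : ∃ e, phi e = f := by
  obtain ⟨c, hc⟩ := Code.exists_code.1 (Partrec.nat_iff.1 hf)
  exact ⟨encode c, by simp [phi, hc]⟩

lemma mem_WSet_curry (c : Code) (i n : ℕ) :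
    n ∈ WSet (encode (Code.curry c i)) ↔ (Code.eval c (Nat.pair i n)).Dom := by
  simp [WSet, phi, PFun.mem_dom, Part.dom_iff_mem, Code.eval_curry]

lemma WSet_eq_of_classOf {k m : ℕ} (h : classOf eqCE k = classOf eqCE m) : WSet k = WSet m := by
  have : m ∈ classOf eqCE k := by rw [h]; exact (rfl : WSet m = WSet m)
  exact this

theorem subE_not_realized_by_intersections :
    ∃ e₀ e : ℕ, subE eqCE e e₀ ∧
      ∀ i d : ℕ, (phi d).ran = (phi e₀).ran ∩ WSet i → ¬ FSJump eqCE e d := by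
  obtain ⟨c, hc⟩ := Code.fixed_point₂ fsAux_partrec
  -- code for the singletons
  obtain ⟨s, hs⟩ : ∃ s : Code, Code.eval s = fun x : ℕ =>
      bif decide (x.unpair.2 = 2 * x.unpair.1) then Part.some 0 else Part.none := by
    have h1 : Primrec (fun p : ℕ => p.unpair.1) := Primrec.fst.comp Primrec.unpair
    have h2 : Primrec (fun p : ℕ => p.unpair.2) := Primrec.snd.comp Primrec.unpair
    refine Code.exists_code.1 (Partrec.nat_iff.1 (Partrec.cond ?_ ?_ Partrec.none))
    · exact (Primrec.eq.decide.comp h2 (Primrec.nat_mul.comp (Primrec.const 2) h1)).to_comp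
    · exact (Computable.const 0).partrec
  let r : ℕ → ℕ := fun i => encode (Code.curry c i)
  let t : ℕ → ℕ := fun i => encode (Code.curry s i)
  have hr : Computable r := curry_enc_comp c
  have ht : Computable t := curry_enc_comp s
  have hWt : ∀ i n, n ∈ WSet (t i) ↔ n = 2 * i := by
    intro i n
    rw [mem_WSet_curry, hs]
    by_cases h : n = 2 * i <;> simp [h]
  have hWr : ∀ i n, n ∈ WSet (r i) ↔ n = 2 * i ∨ (n = 2 * i + 1 ∧ r i ∈ WSet i) := by
    intro i n
    rw [mem_WSet_curry, hc]
    by_cases h : n = 2 * i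
    · simp [h, fsAux]
    · by_cases h' : n = 2 * i + 1
      · simp only [h', fsAux, Nat.unpair_pair]
        simp [WSet, PFun.mem_dom, Part.dom_iff_mem, r]
      · simp [h, h', fsAux]
  obtain ⟨e, he⟩ := exists_phi ht.partrec
  obtain ⟨e₀, he₀⟩ : ∃ e₀, phi e₀ = fun x : ℕ => bif x.bodd then
      (phi x.div2 (r x.div2)).map (fun _ => t x.div2) else Part.some (r x.div2) := by
    apply exists_phi
    have hd : Computable Nat.div2 := Primrec.nat_div2.to_comp
    refine Partrec.cond Primrec.nat_bodd.to_comp ?_ (hr.comp hd).partrec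
    exact (phi_partrec.comp hd (hr.comp hd)).map
      ((ht.comp (hd.comp Computable.fst)).to₂)
  have hre : ∀ k, k ∈ (phi e).ran ↔ ∃ i, k = t i := by
    intro k
    rw [he]
    simp [PFun.ran, eq_comm]
  have hre₀ : ∀ k, k ∈ (phi e₀).ran ↔ ∃ i, k = r i ∨ (r i ∈ WSet i ∧ k = t i) := by
    intro k
    rw [he₀]
    constructor
    · rintro ⟨x, hx⟩
      refine ⟨x.div2, ?_⟩
      cases hb : x.bodd
      · simp [hb] at hx; exact Or.inl hx
      · simp [hb] at hx
        obtain ⟨⟨a, ha⟩, hk⟩ := hx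
        exact Or.inr ⟨(PFun.mem_dom _ _).2 ⟨a, ha⟩, hk.symm⟩
    · rintro ⟨i, h | ⟨h, hk⟩⟩
      · exact ⟨2 * i, by simp [h, Nat.div2_val]⟩
      · obtain ⟨a, ha⟩ := (PFun.mem_dom _ _).1 h
        refine ⟨2 * i + 1, ?_⟩
        have h2 : (2 * i + 1).div2 = i := by rw [Nat.div2_val]; omega
        simp [h2]
        exact ⟨⟨a, ha⟩, hk.symm⟩
  refine ⟨e₀, e, ?_, ?_⟩
  · intro k hk
    obtain ⟨i, rfl⟩ := (hre k).1 hk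
    by_cases h : r i ∈ WSet i
    · exact ⟨t i, (hre₀ _).2 ⟨i, Or.inr ⟨h, rfl⟩⟩, rfl⟩
    · refine ⟨r i, (hre₀ _).2 ⟨i, Or.inl rfl⟩, ?_⟩
      ext n
      rw [hWt, hWr]
      simp [h]
  · intro i d hd hJ
    unfold FSJump at hJ
    by_cases h : r i ∈ WSet i
    · have hm : r i ∈ (phi d).ran := by
        rw [hd]; exact ⟨(hre₀ _).2 ⟨i, Or.inl rfl⟩, h⟩
      have : classOf eqCE (r i) ∈ classOf eqCE '' (phi e).ran := by
        rw [hJ]; exact ⟨_, hm, rfl⟩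
      obtain ⟨k, hk, hkm⟩ := this
      obtain ⟨j, rfl⟩ := (hre k).1 hk
      have hW := WSet_eq_of_classOf hkm
      have a1 : 2 * i ∈ WSet (t j) := by rw [hW, hWr]; simp
      have a2 : 2 * i + 1 ∈ WSet (t j) := by rw [hW, hWr]; simp [h]
      rw [hWt] at a1 a2
      omega
    · have : classOf eqCE (t i) ∈ classOf eqCE '' (phi d).ran := by
        rw [← hJ]; exact ⟨_, (hre _).2 ⟨i, rfl⟩, rfl⟩
      obtain ⟨m, hm, hkm⟩ := this
      have hW := WSet_eq_of_classOf hkm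
      rw [hd] at hm
      obtain ⟨hm0, hmi⟩ := hm
      obtain ⟨j, rfl | ⟨hj, rfl⟩⟩ := (hre₀ m).1 hm0
      · have a1 : 2 * j ∈ WSet (t i) := by rw [← hW, hWr]; simp
        rw [hWt] at a1
        obtain rfl : j = i := by omega
        exact h hmi
      · have a1 : 2 * j ∈ WSet (t i) := by rw [← hW, hWt]
        rw [hWt] at a1
        obtain rfl : j = i := by omega
        exact h hj
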